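/- (Markov brothers' inequality on a general interval.) Let d, k ∈ ℕ, let a < b be real numbers, and let p ∈ ℝ[X] be a polynomial of degree at most d. Then sup_{x ∈ [a,b]} |p^{(k)}(x)| ≤ (2/(b−a))^k · C_M(d,k) · sup_{x ∈ [a,b]} |p(x)|, where C_M(d,k) = (∏_{j=0}^{k−1} (d² − j²)) / (∏_{j=0}^{k−1} (2j+1)). -/

import Mathlib

/-- The Markov constant `C_M(d,k) = d²(d²−1²)⋯(d²−(k−1)²)/(1·3·5⋯(2k−1))`. -/
noncomputable def markovConst (d k : ℕ) : ℝ :=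
  (∏ j ∈ Finset.range k, ((d : ℝ) ^ 2 - (j : ℝ) ^ 2)) /
    (∏ j ∈ Finset.range k, (2 * (j : ℝ) + 1))

open Polynomial

theorem mk_inj_card (F : ℝ[X]) (hF : F ≠ 0) (m : ℕ) (y : ℕ → ℝ)
    (hy : ∀ i < m, ∀ j < m, i < j → y i ≠ y j) (hr : ∀ i < m, F.eval (y i) = 0) :
    m ≤ F.roots.toFinset.card := by
  have h1 : (Finset.range m).image y ⊆ F.roots.toFinset := by
    intro z hz
    simp only [Finset.mem_image, Finset.mem_range] at hz
    obtain ⟨i, hi, rfl⟩ := hz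
    simp [hF, hr i hi]
  have h2 : ((Finset.range m).image y).card = m := by
    rw [Finset.card_image_of_injOn, Finset.card_range]
    intro i hi j hj hij
    simp only [Finset.coe_range, Set.mem_Iio] at hi hj
    rcases lt_trichotomy i j with h | h | h
    · exact absurd hij (hy i hi j hj h)
    · exact h
    · exact absurd hij.symm (hy j hj i hi h)
  calc m = _ := h2.symm
    _ ≤ _ := Finset.card_le_card h1

theorem mk_inj_card_succ (F : ℝ[X]) (hF : F ≠ 0) (m : ℕ) (y : ℕ → ℝ) (w : ℝ)
    (hy : ∀ i < m, ∀ j < m, i < j → y i ≠ y j) (hr : ∀ i < m, F.eval (y i) = 0)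
    (hw : F.eval w = 0) (hwy : ∀ i < m, y i ≠ w) :
    m + 1 ≤ F.roots.toFinset.card := by
  refine mk_inj_card F hF (m+1) (fun i => if i < m then y i else w) ?_ ?_
  · intro i hi j hj hij
    have him : i < m := by omega
    simp only [him, if_true]
    split_ifs with h
    · exact hy i him j h hij
    · exact hwy i him
  · intro i hi
    by_cases h : i < m
    · simp [h, hr i h]
    · simp [h, hw]

theorem mk_ivt (F : ℝ[X]) (a b : ℝ) (hab : a < b) (h : F.eval a * F.eval b < 0) :
    ∃ z, a < z ∧ z < b ∧ F.eval z = 0 := by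
  have hc : ContinuousOn (fun x => F.eval x) (Set.Icc a b) := F.continuous.continuousOn
  rcases mul_neg_iff.1 h with ⟨h1, h2⟩ | ⟨h1, h2⟩
  · obtain ⟨z, hz, hz0⟩ := intermediate_value_Ioo' hab.le hc (show (0:ℝ) ∈ Set.Ioo _ _ from ⟨h2, h1⟩)
    exact ⟨z, hz.1, hz.2, hz0⟩
  · obtain ⟨z, hz, hz0⟩ := intermediate_value_Ioo hab.le hc (show (0:ℝ) ∈ Set.Ioo _ _ from ⟨h1, h2⟩)
    exact ⟨z, hz.1, hz.2, hz0⟩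

/-- A real polynomial of positive degree eventually has the sign of its leading coefficient. -/
theorem mk_sign_top (F : ℝ[X]) (s : ℝ) (hd : 0 < F.natDegree) :
    ∃ z, s < z ∧ 0 < F.leadingCoeff * F.eval z := by
  have hF : F ≠ 0 := by rintro rfl; simp at hd
  have hl : F.leadingCoeff ≠ 0 := by simpa using hF
  have hd' : 0 < (C F.leadingCoeff * F).degree := by
    rw [degree_C_mul hl]; exact natDegree_pos_iff_degree_pos.1 hd
  have := Polynomial.tendsto_atTop_of_leadingCoeff_nonneg (C F.leadingCoeff * F) hd'
    (by rw [leadingCoeff_mul, leadingCoeff_C]; exact mul_self_nonneg _)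
  obtain ⟨z, h1, h2⟩ := ((this.eventually_gt_atTop 0).and (Filter.eventually_gt_atTop s)).exists
  exact ⟨z, h2, by simpa using h1⟩

theorem mk_sign_bot (F : ℝ[X]) (s : ℝ) (hd : 0 < F.natDegree) :
    ∃ z, z < s ∧ 0 < (-1) ^ F.natDegree * F.leadingCoeff * F.eval z := by
  have h1 : (F.comp (-X)).natDegree = F.natDegree := by simp [natDegree_comp]
  obtain ⟨z, hz, h⟩ := mk_sign_top (F.comp (-X)) (-s) (by rw [h1]; exact hd)
  refine ⟨-z, by linarith, ?_⟩
  rw [leadingCoeff_comp (by simp)] at h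
  simpa [mul_comm, mul_left_comm] using h

theorem mk_alt_sign (F : ℝ[X]) (s : ℕ → ℝ) (m : ℕ)
    (hs : ∀ i < m, F.eval (s i) * F.eval (s (i+1)) < 0) (h0 : F.eval (s 0) ≠ 0) :
    ∀ i ≤ m, 0 < (-1)^i * (F.eval (s 0) * F.eval (s i)) := by
  intro i
  induction i with
  | zero => intro _; simpa using mul_self_pos.2 h0
  | succ i ih =>
    intro hi
    have h1 := ih (by omega)
    have h2 := hs i (by omega)
    have : (-1 : ℝ)^(i+1) = -(-1)^i := by ring
    rw [this]
    by_contra hcon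
    push Not at hcon
    set e : ℝ := (-1)^i
    have h3 : (e * (F.eval (s 0) * F.eval (s i))) * (- e * (F.eval (s 0) * F.eval (s (i+1)))) ≤ 0 :=
      mul_nonpos_of_nonneg_of_nonpos h1.le hcon
    have h4 : 0 < (e * F.eval (s 0))^2 := by
      have : e * F.eval (s 0) ≠ 0 := mul_ne_zero (by simp [e]) h0
      positivity
    nlinarith [mul_pos h4 (neg_pos.2 h2)]

theorem mk_lemmaA (F : ℝ[X]) (n : ℕ) (hn : 1 ≤ n) (hd : F.natDegree ≤ n) (s : ℕ → ℝ)
    (hs : ∀ i, i + 1 < n → s (i+1) < s i) (h0 : F.eval (s 0) ≠ 0)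
    (ha : ∀ i, i + 1 < n → F.eval (s i) * F.eval (s (i+1)) < 0) :
    F ≠ 0 ∧ n - 1 ≤ F.natDegree ∧ F.natDegree ≤ F.roots.toFinset.card := by
  have hF : F ≠ 0 := by rintro rfl; simp at h0
  have hanti : ∀ j, ∀ i ≤ j, j < n → s j ≤ s i := by
    intro j
    induction j with
    | zero => intro i hi _; simp [Nat.le_zero.1 hi]
    | succ j ih =>
      intro i hi hj
      rcases Nat.lt_or_ge i (j+1) with h | h
      · exact (hs j hj).le.trans (ih i (by omega) (by omega))
      · have : i = j + 1 := by omega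
        rw [this]
  have hz : ∀ i, ∃ z, i + 1 < n → s (i+1) < z ∧ z < s i ∧ F.eval z = 0 := by
    intro i
    by_cases h : i + 1 < n
    · obtain ⟨z, hz⟩ := mk_ivt F _ _ (hs i h) (by rw [mul_comm]; exact ha i h)
      exact ⟨z, fun _ => hz⟩
    · exact ⟨0, fun h' => absurd h' h⟩
  choose y hy using hz
  have hinj : ∀ i < n - 1, ∀ j < n - 1, i < j → y i ≠ y j := by
    intro i hi j hj hij
    have h1 := (hy i (by omega)).1
    have h2 := (hy j (by omega)).2.1
    have h3 := hanti j (i+1) (by omega) (by omega)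
    exact (by linarith : y j < y i).ne'
  have hroot : ∀ i < n - 1, F.eval (y i) = 0 := fun i hi => (hy i (by omega)).2.2
  have hcard := mk_inj_card F hF (n-1) y hinj hroot
  have hle : F.roots.toFinset.card ≤ F.natDegree :=
    (Multiset.toFinset_card_le _).trans (card_roots' F)
  refine ⟨hF, hcard.trans hle, ?_⟩
  rcases Nat.lt_or_ge F.natDegree n with h | h
  · omega
  have hdn : F.natDegree = n := le_antisymm hd h
  have hl : F.leadingCoeff ≠ 0 := by simpa using hF
  suffices h : ∃ w, F.eval w = 0 ∧ (s 0 < w ∨ w < s (n-1)) by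
    obtain ⟨w, hw, hw2⟩ := h
    have := mk_inj_card_succ F hF (n-1) y w hinj hroot hw (by
      intro i hi
      have h1 := hy i (by omega)
      have h2 := hanti (n-1) (i+1) (by omega) (by omega)
      have h3 := hanti i 0 (by omega) (by omega)
      rcases hw2 with h | h
      · exact (by linarith : y i < w).ne
      · exact (by linarith : w < y i).ne')
    omega
  have hsgn := mk_alt_sign F s (n-1) (fun i hi => ha i (by omega)) h0 (n-1) le_rfl
  rcases lt_or_gt_of_ne (mul_ne_zero hl h0) with hg | hg
  · obtain ⟨z, hz1, hz2⟩ := mk_sign_top F (s 0) (by omega)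
    obtain ⟨w, hw⟩ := mk_ivt F (s 0) z hz1 (by
      by_contra hc
      push Not at hc
      have := mul_nonneg hc (sq_nonneg F.leadingCoeff)
      nlinarith [mul_pos hz2 (neg_pos.2 hg)])
    exact ⟨w, hw.2.2, Or.inl hw.1⟩
  · obtain ⟨z, hz1, hz2⟩ := mk_sign_bot F (s (n-1)) (by omega)
    obtain ⟨w, hw⟩ := mk_ivt F z (s (n-1)) hz1 (by
      rw [hdn] at hz2
      by_contra hc
      push Not at hc
      obtain ⟨m, rfl⟩ : ∃ m, n = m + 1 := ⟨n - 1, by omega⟩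
      simp only [Nat.add_sub_cancel] at *
      have e2 : ((-1:ℝ)^m)^2 = 1 := by rw [← pow_mul, mul_comm, pow_mul]; simp
      rw [pow_succ] at hz2
      set e : ℝ := (-1)^m
      have h5 := mul_pos (mul_pos hz2 hsgn) hg
      have h6 := mul_nonneg hc (sq_nonneg (e * F.leadingCoeff * F.eval (s 0)))
      nlinarith)
    exact ⟨w, hw.2.2, Or.inr hw.2.1⟩

theorem mk_simple_iter (F : ℝ[X]) (hF : F ≠ 0) (hc : F.natDegree ≤ F.roots.toFinset.card) (k : ℕ) :
    k ≤ F.natDegree → (derivative^[k] F ≠ 0 ∧ (derivative^[k] F).natDegree = F.natDegree - k ∧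
      F.natDegree - k ≤ (derivative^[k] F).roots.toFinset.card) := by
  induction k with
  | zero => intro _; simpa using ⟨hF, hc⟩
  | succ k ih =>
    intro hk
    obtain ⟨h1, h2, h3⟩ := ih (by omega)
    rw [Function.iterate_succ_apply']
    set G := derivative^[k] F
    refine ⟨?_, ?_, ?_⟩
    · intro h
      have := Polynomial.derivative_eq_zero.1 h
      omega
    · rw [natDegree_derivative]; omega
    · have := card_roots_toFinset_le_derivative G
      omega

theorem mk_simple (F : ℝ[X]) (hF : F ≠ 0) (hc : F.natDegree ≤ F.roots.toFinset.card) (k : ℕ)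
    (hk : k ≤ F.natDegree) (z : ℝ) (h0 : (derivative^[k] F).eval z = 0)
    (h1 : (derivative^[k+1] F).eval z = 0) : False := by
  obtain ⟨g1, g2, g3⟩ := mk_simple_iter F hF hc k hk
  rw [Function.iterate_succ_apply'] at h1
  set G := derivative^[k] F
  have hle : G.roots.toFinset.card ≤ G.roots.card := (Multiset.toFinset_card_le _)
  have hle2 := (card_roots' G)
  have hnd : G.roots.Nodup := Multiset.toFinset_card_eq_card_iff_nodup.1 (by omega)
  have := (one_lt_rootMultiplicity_iff_isRoot g1 (t := z)).2 ⟨h0, h1⟩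
  rw [← count_roots] at this
  have := Multiset.nodup_iff_count_le_one.1 hnd z
  omega

/-- The `j`-th derivative of the Chebyshev polynomial `T_n`. -/
noncomputable def mkD (n j : ℕ) : ℝ[X] := derivative^[j] (Chebyshev.T ℝ (n : ℤ))

theorem mkD_zero (n : ℕ) : mkD n 0 = Chebyshev.T ℝ (n : ℤ) := rfl

theorem mkD_deriv (n j : ℕ) : derivative (mkD n j) = mkD n (j+1) := by
  rw [mkD, mkD, Function.iterate_succ_apply']

theorem mkD_natDegree_zero (n : ℕ) : (mkD n 0).natDegree = n := by
  simp [mkD_zero]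

theorem mk_node_deriv (n i : ℕ) (h0 : 0 < i) (hi : i < n) :
    (mkD n 1).eval (Chebyshev.node n i) = 0 := by
  rw [← mkD_deriv, mkD_zero, Chebyshev.T_derivative_eq_U]
  have hn : (0:ℝ) < n := by exact_mod_cast (by omega : 0 < n)
  have h := Chebyshev.U_real_cos ((i:ℝ) * Real.pi / n) ((n:ℤ) - 1)
  have h1 : ((((n:ℤ) - 1 : ℤ) : ℝ) + 1) * ((i:ℝ) * Real.pi / n) = (i:ℝ) * Real.pi := by
    push_cast; field_simp; ring
  rw [h1, Real.sin_nat_mul_pi] at h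
  have hs : 0 < Real.sin ((i:ℝ) * Real.pi / n) := by
    have : (0:ℝ) < i := by exact_mod_cast h0
    have hin : (i:ℝ) < n := by exact_mod_cast hi
    apply Real.sin_pos_of_pos_of_lt_pi
    · have := Real.pi_pos; positivity
    · rw [div_lt_iff₀ hn]; nlinarith [Real.pi_pos]
  have h2 := (mul_eq_zero.1 h).resolve_right hs.ne'
  rw [eval_mul, Chebyshev.node, h2, mul_zero]

theorem mkD_T_A (n : ℕ) (hn : 1 ≤ n) :
    mkD n 0 ≠ 0 ∧ n - 1 ≤ (mkD n 0).natDegree ∧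
      (mkD n 0).natDegree ≤ (mkD n 0).roots.toFinset.card := by
  apply mk_lemmaA (mkD n 0) n hn (mkD_natDegree_zero n).le (fun i => Chebyshev.node n i)
  · intro i hi
    exact Chebyshev.node_lt (by omega) (by omega)
  · simp [mkD_zero, Chebyshev.node_eq_one]
  · intro i hi
    rw [mkD_zero, Chebyshev.eval_T_real_node (by simp; omega),
      Chebyshev.eval_T_real_node (by simp; omega), pow_succ, ← mul_assoc, ← pow_add, ← two_mul,
      pow_mul]
    simp

theorem mkD_roots (n k : ℕ) (hn : 1 ≤ n) (hk : k ≤ n) :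
    mkD n k ≠ 0 ∧ (mkD n k).natDegree = n - k ∧ (mkD n k).roots.toFinset.card = n - k := by
  obtain ⟨h1, h2, h3⟩ := mkD_T_A n hn
  have := mk_simple_iter (mkD n 0) h1 h3 k (by rw [mkD_natDegree_zero]; exact hk)
  rw [mkD_natDegree_zero] at this
  obtain ⟨a1, a2, a3⟩ := this
  refine ⟨a1, a2, le_antisymm ?_ a3⟩
  have h4 : (mkD n k).roots.toFinset.card ≤ (mkD n k).natDegree :=
    (Multiset.toFinset_card_le _).trans (card_roots' _)
  exact h4.trans a2.le

theorem mkD_no_double (n k : ℕ) (hn : 1 ≤ n) (hk : k ≤ n) (z : ℝ) (h0 : (mkD n k).eval z = 0)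
    (h1 : (mkD n (k+1)).eval z = 0) : False := by
  obtain ⟨g1, g2, g3⟩ := mkD_T_A n hn
  exact mk_simple (mkD n 0) g1 g3 k (by rw [mkD_natDegree_zero]; exact hk) z h0 h1

theorem mkD_pos (n j : ℕ) (hj : j ≤ n) (y : ℝ) (hy : 1 ≤ y) : 0 < (mkD n j).eval y := by
  have := Chebyshev.eval_iterate_derivative_le_of_forall_abs_le_one (n := n) (P := (X : ℝ[X])^j)
    (k := j) hy (by rw [degree_X_pow]; exact_mod_cast hj) (by
      intro x hx
      rw [eval_pow, eval_X, abs_pow]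
      exact pow_le_one₀ (abs_nonneg _) (abs_le.2 hx))
  refine lt_of_lt_of_le ?_ this
  rw [iterate_derivative_X_pow_eq_C_mul]
  simp [Nat.descFactorial_self, Nat.factorial_pos]

theorem mkD_parity (n j : ℕ) : (mkD n j).comp (-X) = C ((-1)^(n+j)) * mkD n j := by
  induction j with
  | zero =>
    apply Polynomial.funext
    intro x
    rw [mkD_zero, eval_comp, eval_neg, eval_X, Chebyshev.T_eval_neg]
    simp [Int.negOnePow_def]
  | succ j ih =>
    have := congrArg derivative ih
    rw [derivative_comp, derivative_C_mul, mkD_deriv] at this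
    have e : C ((-1:ℝ)^(n+(j+1))) = - C ((-1:ℝ)^(n+j)) := by
      rw [← C_neg]; congr 1; ring
    rw [e, neg_mul, ← this]
    simp

theorem mkD_eval_neg (n j : ℕ) (y : ℝ) :
    (mkD n j).eval (-y) = (-1)^(n+j) * (mkD n j).eval y := by
  have := congrArg (eval y) (mkD_parity n j)
  simpa using this

theorem mkD_ne (n j : ℕ) (hj : j ≤ n) (y : ℝ) (hy : 1 ≤ |y|) : (mkD n j).eval y ≠ 0 := by
  rcases le_abs'.1 hy with h | h
  · have := mkD_pos n j hj (-y) (by linarith)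
    rw [mkD_eval_neg] at this
    intro h0
    simp [h0] at this
  · exact (mkD_pos n j hj y h).ne'

theorem mkD_root_mem (n j : ℕ) (hj : j ≤ n) (y : ℝ) (hy : (mkD n j).eval y = 0) :
    -1 < y ∧ y < 1 := by
  by_contra h
  exact mkD_ne n j hj y (by
    by_contra h'
    push Not at h'
    exact h (abs_lt.1 h')) hy

theorem mkD_one_one (n : ℕ) : (mkD n 1).eval 1 = (n:ℝ)^2 := by
  have := Chebyshev.iterate_derivative_T_eval_one_eq_div (𝔽 := ℝ) (n:ℤ) 1
  simpa [mkD] using this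

theorem mkD_one_neg_one (n : ℕ) : (mkD n 1).eval (-1) = (-1)^(n+1) * (n:ℝ)^2 := by
  rw [mkD_eval_neg, mkD_one_one]

/-- The iterated derivative of a linear factor times the derivative of the Chebyshev polynomial. -/
theorem mk_omega_iter (n : ℕ) (u v : ℝ) (k : ℕ) :
    derivative^[k] ((C u * X - C v) * mkD n 1) =
      (C u * X - C v) * mkD n (k+1) + C ((k:ℝ) * u) * mkD n k := by
  induction k with
  | zero => simp
  | succ k ih =>
    rw [Function.iterate_succ_apply', ih]
    simp only [derivative_add, derivative_mul, derivative_C, derivative_X, derivative_sub,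
      mkD_deriv]
    push_cast
    simp only [C_mul, C_add, map_natCast, C_1]
    ring

theorem mk_iter_add (k : ℕ) (f g : ℝ[X]) :
    derivative^[k] (f + g) = derivative^[k] f + derivative^[k] g := iterate_map_add _ _ _ _

theorem mk_alt_prod (al A B : ℝ) (i : ℕ) (h1 : 0 < al * ((-1)^i * A))
    (h2 : 0 < al * ((-1)^(i+1) * B)) : A * B < 0 := by
  have e2 : ((-1:ℝ)^i)^2 = 1 := by rw [← pow_mul, mul_comm, pow_mul]; simp
  rw [pow_succ] at h2
  set e : ℝ := (-1)^i
  have h3 := mul_pos h1 h2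
  have h4 : al * (e * A) * (al * (e * -1 * B)) = - (al^2 * (A * B)) := by
    linear_combination (-al^2 * A * B) * e2
  rw [h4] at h3
  by_contra hc
  push Not at hc
  nlinarith [mul_nonneg (sq_nonneg al) hc]

theorem mk_omega_case (n k : ℕ) (hk : 1 ≤ k) (hkn : k + 1 ≤ n) (u v x : ℝ)
    (huv : u^2 ≤ v^2) (hne : ¬ (u = 0 ∧ v = 0))
    (h0 : (derivative^[k] ((C u * X - C v) * mkD n 1)).eval x = 0)
    (h1 : (derivative^[k+1] ((C u * X - C v) * mkD n 1)).eval x = 0) : False := by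
  obtain ⟨a1, a2, a3⟩ := mkD_roots n 1 (by omega) (by omega)
  have hl : (C u * X - C v : ℝ[X]) ≠ 0 := by
    intro h
    apply hne
    have e0 := congrArg (eval 0) h
    have e1 := congrArg (eval 1) h
    simp at e0 e1
    exact ⟨by linarith, e0⟩
  have hw : (C u * X - C v) * mkD n 1 ≠ 0 := mul_ne_zero hl a1
  have hle : ((C u * X - C v) * mkD n 1).roots.toFinset.card ≤
      ((C u * X - C v) * mkD n 1).natDegree :=
    (Multiset.toFinset_card_le _).trans (card_roots' _)
  have hsub : (mkD n 1).roots.toFinset ⊆ ((C u * X - C v) * mkD n 1).roots.toFinset := by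
    intro z hz
    simp only [Multiset.mem_toFinset, mem_roots a1, mem_roots hw, IsRoot.def, eval_mul] at hz ⊢
    rw [hz, mul_zero]
  have hcard := Finset.card_le_card hsub
  have hdl : (C u * X - C v : ℝ[X]).natDegree ≤ 1 := by compute_degree
  have hd : ((C u * X - C v) * mkD n 1).natDegree =
      (C u * X - C v : ℝ[X]).natDegree + (n - 1) := by
    rw [natDegree_mul hl a1, a2]
  refine mk_simple _ hw ?_ k (by omega) x h0 h1
  by_cases hu : u = 0
  · have : (C u * X - C v : ℝ[X]).natDegree = 0 := by
      rw [hu]; simp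
    omega
  · have hroot : eval (v/u) ((C u * X - C v) * mkD n 1) = 0 := by
      simp [mul_div_cancel₀ _ hu]
    have hnot : v/u ∉ (mkD n 1).roots.toFinset := by
      intro hz
      simp only [Multiset.mem_toFinset, mem_roots a1, IsRoot.def] at hz
      refine mkD_ne n 1 (by omega) _ ?_ hz
      rw [abs_div, le_div_iff₀ (abs_pos.2 hu), one_mul]
      exact sq_le_sq.1 huv
    have hsub2 : insert (v/u) (mkD n 1).roots.toFinset ⊆
        ((C u * X - C v) * mkD n 1).roots.toFinset := by
      apply Finset.insert_subset _ hsub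
      simp only [Multiset.mem_toFinset, mem_roots hw, IsRoot.def]
      exact hroot
    have := Finset.card_le_card hsub2
    rw [Finset.card_insert_of_notMem hnot] at this
    omega

theorem mk_lemmaC (n k : ℕ) (hk : 1 ≤ k) (hkn : k + 1 ≤ n) (p : ℝ[X]) (hp : p.natDegree ≤ n)
    (hb : ∀ x ∈ Set.Icc (-1:ℝ) 1, |p.eval x| ≤ 1) (x u v : ℝ)
    (hu : u = (mkD n (k+1)).eval x) (hv : v = x * u + k * (mkD n k).eval x)
    (huv : u^2 ≤ v^2) : |(derivative^[k] p).eval x| ≤ |(mkD n k).eval x| := by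
  by_contra hcon
  push Not at hcon
  set q := (derivative^[k] p).eval x with hq
  have hq0 : q ≠ 0 := by
    intro h; rw [h, abs_zero] at hcon; exact absurd hcon (not_lt.2 (abs_nonneg _))
  have hkR : (0:ℝ) < k := by exact_mod_cast hk
  have hnR : (0:ℝ) < (n:ℝ)^2 := by
    have : (0:ℝ) < n := by exact_mod_cast (by omega : 0 < n)
    positivity
  obtain ⟨lam, hlam⟩ : ∃ lam, lam = (mkD n k).eval x / q := ⟨_, rfl⟩
  have hlam1 : |lam| < 1 := by
    rw [hlam, abs_div, div_lt_one (abs_pos.2 hq0)]; exact hcon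
  have hlamq : (mkD n k).eval x - lam * q = 0 := by rw [hlam]; field_simp; ring
  obtain ⟨h, hh⟩ : ∃ h : ℝ[X], h = mkD n 0 - C lam * p := ⟨_, rfl⟩
  have hsign : ∀ i ≤ n, 0 < (-1)^i * h.eval (Chebyshev.node n i) := by
    intro i hi
    have e2 : ((-1:ℝ)^i) * (-1)^i = 1 := by rw [← mul_pow]; simp
    have e1 : |((-1:ℝ)^i)| = 1 := by simp
    rw [hh, eval_sub, mkD_zero, Chebyshev.eval_T_real_node (by simpa using hi), mul_sub, e2,
      eval_mul, eval_C]
    have h1 := hb _ (Chebyshev.node_mem_Icc (n := n) (i := i))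
    have h2 : |(-1)^i * (lam * p.eval (Chebyshev.node n i))| < 1 := by
      rw [abs_mul, e1, one_mul, abs_mul]
      calc |lam| * |p.eval (Chebyshev.node n i)| ≤ |lam| * 1 := by gcongr
        _ < 1 := by linarith
    have := (abs_lt.1 h2).2
    linarith
  have hhk : (derivative^[k] h).eval x = 0 := by
    rw [hh, iterate_derivative_sub, iterate_derivative_C_mul, eval_sub, eval_mul, eval_C, ← hq]
    exact hlamq
  have hhd : h.natDegree ≤ n := by
    rw [hh]
    refine (natDegree_sub_le _ _).trans (max_le (mkD_natDegree_zero n).le ?_)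
    exact (natDegree_C_mul_le _ _).trans hp
  obtain ⟨w, hw⟩ : ∃ w : ℝ[X], w = (C u * X - C v) * mkD n 1 := ⟨_, rfl⟩
  have hwk : (derivative^[k] w).eval x = 0 := by
    rw [hw, mk_omega_iter]
    simp only [eval_add, eval_mul, eval_sub, eval_C, eval_X, ← hu]
    rw [hv]; ring
  have hwd : w.natDegree ≤ n := by
    rw [hw]
    refine natDegree_mul_le.trans ?_
    have h1 : (C u * X - C v : ℝ[X]).natDegree ≤ 1 := by compute_degree
    have h2 := (mkD_roots n 1 (by omega) (by omega)).2.1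
    omega
  have hne : ¬ (u = 0 ∧ v = 0) := by
    rintro ⟨h1, h2⟩
    refine mkD_no_double n k (by omega) (by omega) x ?_ (hu ▸ h1)
    rw [h2, h1] at hv
    have : (k:ℝ) * (mkD n k).eval x = 0 := by linarith
    exact (mul_eq_zero.1 this).resolve_left hkR.ne'
  obtain ⟨al, hal⟩ : ∃ al, al = (derivative^[k+1] w).eval x := ⟨_, rfl⟩
  obtain ⟨be, hbe⟩ : ∃ be, be = -(derivative^[k+1] h).eval x := ⟨_, rfl⟩
  by_cases hal0 : al = 0
  · exact mk_omega_case n k hk hkn u v x huv hne (hw ▸ hwk) (by rw [← hw, ← hal, hal0])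
  obtain ⟨F, hF⟩ : ∃ F : ℝ[X], F = C al * h + C be * w := ⟨_, rfl⟩
  have hF0 : (derivative^[k] F).eval x = 0 := by
    rw [hF, mk_iter_add, iterate_derivative_C_mul, iterate_derivative_C_mul]
    simp [hhk, hwk]
  have hF1 : (derivative^[k+1] F).eval x = 0 := by
    rw [hF, mk_iter_add, iterate_derivative_C_mul, iterate_derivative_C_mul]
    simp only [eval_add, eval_mul, eval_C, ← hal]
    rw [hbe]; ring
  have hFd : F.natDegree ≤ n := by
    rw [hF]
    refine (natDegree_add_le _ _).trans (max_le ?_ ?_)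
    · exact (natDegree_C_mul_le _ _).trans hhd
    · exact (natDegree_C_mul_le _ _).trans hwd
  have hFe : ∀ y, F.eval y = al * h.eval y + be * ((u * y - v) * (mkD n 1).eval y) := by
    intro y; rw [hF, hw]; simp
  have hal2 : 0 < al^2 := by positivity
  have hmid : ∀ i, 0 < i → i < n → 0 < al * ((-1)^i * F.eval (Chebyshev.node n i)) := by
    intro i h0 hi
    rw [hFe, mk_node_deriv n i h0 hi]
    have := mul_pos hal2 (hsign i hi.le)
    nlinarith
  suffices hs : ∃ s : ℕ → ℝ, (∀ i, i + 1 < n → s (i+1) < s i) ∧ F.eval (s 0) ≠ 0 ∧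
      ∀ i, i + 1 < n → F.eval (s i) * F.eval (s (i+1)) < 0 by
    obtain ⟨s, s1, s2, s3⟩ := hs
    obtain ⟨g1, g2, g3⟩ := mk_lemmaA F n (by omega) hFd s s1 s2 s3
    exact mk_simple F g1 g3 k (by omega) x hF0 hF1
  by_cases hc : 0 ≤ al * be * (u - v)
  · have h0 : ∀ i, i < n → 0 < al * ((-1)^i * F.eval (Chebyshev.node n i)) := by
      intro i hi
      rcases Nat.eq_zero_or_pos i with h0 | h0
      · rw [h0, hFe]
        have h1 := mul_pos hal2 (hsign 0 (by omega))
        rw [Chebyshev.node_eq_one] at h1 ⊢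
        rw [mkD_one_one]
        have h2 := mul_nonneg hc hnR.le
        simp only [pow_zero, one_mul, mul_one] at *
        nlinarith
      · exact hmid i h0 hi
    refine ⟨fun i => Chebyshev.node n i, ?_, ?_, ?_⟩
    · intro i hi; exact Chebyshev.node_lt (by omega) (by omega)
    · intro hz; have := h0 0 (by omega); simp only [hz] at this; simp at this
    · intro i hi
      exact mk_alt_prod al _ _ i (h0 i (by omega)) (h0 (i+1) hi)
  · push Not at hc
    have hc2 : 0 ≤ al * be * (u + v) := by
      by_contra h'
      push Not at h'
      have h3 := mul_pos_of_neg_of_neg hc h'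
      have h4 : al * be * (u - v) * (al * be * (u + v)) = (al * be)^2 * (u^2 - v^2) := by ring
      rw [h4] at h3
      nlinarith [sq_nonneg (al * be)]
    have h0 : ∀ i, 0 < i → i ≤ n → 0 < al * ((-1)^i * F.eval (Chebyshev.node n i)) := by
      intro i h0 hi
      rcases Nat.lt_or_ge i n with hin | hin
      · exact hmid i h0 hin
      · have : i = n := by omega
        subst this
        rw [hFe]
        have h1 := mul_pos hal2 (hsign i le_rfl)
        rw [Chebyshev.node_eq_neg_one (by omega)] at h1 ⊢
        rw [mkD_one_neg_one, pow_succ]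
        have h2 := mul_nonneg hc2 hnR.le
        have e2 : ((-1:ℝ)^i) * (-1)^i = 1 := by rw [← mul_pow]; simp
        set e : ℝ := (-1)^i
        have : al * (e * (al * eval (-1) h + be * ((u * -1 - v) * (e * -1 * (i:ℝ)^2)))) =
          al^2 * (e * eval (-1) h) + al * be * (u + v) * (i:ℝ)^2 := by
          linear_combination (al * be * (u+v) * (i:ℝ)^2) * e2
        rw [this]
        linarith
    refine ⟨fun i => Chebyshev.node n (i+1), ?_, ?_, ?_⟩
    · intro i hi; exact Chebyshev.node_lt (by omega) (by omega)
    · intro hz; have := h0 1 (by omega) (by omega); simp only [zero_add] at hz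
      rw [hz] at this; simp at this
    · intro i hi
      exact mk_alt_prod al _ _ (i+1) (h0 (i+1) (by omega) (by omega)) (h0 (i+2) (by omega) (by omega))

/-- Auxiliary majorant polynomial `(X² - 1) T^{(k+1)} + k X T^{(k)}`. -/
noncomputable def mkf (n k : ℕ) : ℝ[X] := (X^2 - 1) * mkD n (k+1) + C (k:ℝ) * X * mkD n k

theorem mkf_eval (n k : ℕ) (y : ℝ) : (mkf n k).eval y =
    (y^2 - 1) * (mkD n (k+1)).eval y + k * y * (mkD n k).eval y := by
  simp [mkf]

/-- The polynomial `V² - U²` with `U = T^{(k+1)}` and `V = X U + k T^{(k)}`. -/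
noncomputable def mkG (n k : ℕ) : ℝ[X] :=
  (X * mkD n (k+1) + C (k:ℝ) * mkD n k)^2 - (mkD n (k+1))^2

theorem mkG_eval (n k : ℕ) (y : ℝ) : (mkG n k).eval y =
    (y * (mkD n (k+1)).eval y + k * (mkD n k).eval y)^2 - ((mkD n (k+1)).eval y)^2 := by
  simp [mkG]

theorem mk_fG (n k : ℕ) (y : ℝ) : ((mkf n k).eval y)^2 =
    (k * (mkD n k).eval y)^2 - (1 - y^2) * (mkG n k).eval y := by
  rw [mkf_eval, mkG_eval]; ring

theorem mkG_one (n k : ℕ) (hk : 1 ≤ k) (hkn : k + 1 ≤ n) : 0 < (mkG n k).eval 1 := by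
  rw [mkG_eval]
  have h1 := mkD_pos n k (by omega) 1 le_rfl
  have h2 := mkD_pos n (k+1) (by omega) 1 le_rfl
  have hkR : (0:ℝ) < k := by exact_mod_cast hk
  have h3 := mul_pos hkR h1
  nlinarith [mul_pos h2 h3]

theorem mkG_neg_one (n k : ℕ) (hk : 1 ≤ k) (hkn : k + 1 ≤ n) : 0 < (mkG n k).eval (-1) := by
  have h := mkG_one n k hk hkn
  rw [mkG_eval] at h ⊢
  rw [mkD_eval_neg, mkD_eval_neg]
  have e2 : ((-1:ℝ)^(n+k))^2 = 1 := by rw [← pow_mul, mul_comm, pow_mul]; simp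
  rw [← add_assoc, pow_succ (-1:ℝ) (n+k)]
  set e : ℝ := (-1)^(n+k)
  have : ∀ A B : ℝ, (-1 * (e * -1 * A) + k * (e * B))^2 - (e * -1 * A)^2 =
      (1 * A + k * B)^2 - A^2 := by
    intro A B
    linear_combination ((A + k*B)^2 - A^2) * e2
  rw [this]; exact h

theorem mk_zero_le (G : ℝ[X]) (a x : ℝ) (hax : a ≤ x) (ha : 0 ≤ G.eval a) (hx : G.eval x < 0) :
    ∃ l, a ≤ l ∧ l < x ∧ G.eval l = 0 ∧ ∀ y, l < y → y ≤ x → G.eval y < 0 := by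
  have hc : IsCompact (Set.Icc a x ∩ {y | 0 ≤ G.eval y}) :=
    isCompact_Icc.inter_right (isClosed_le continuous_const G.continuous)
  obtain ⟨l, hl, hl2⟩ := hc.exists_isGreatest ⟨a, ⟨le_rfl, hax⟩, ha⟩
  have hlx : l < x := by
    refine lt_of_le_of_ne hl.1.2 ?_
    rintro rfl
    exact absurd hl.2 (not_le.2 hx)
  have hneg : ∀ y, l < y → y ≤ x → G.eval y < 0 := by
    intro y h1 h2
    by_contra h
    push Not at h
    exact absurd (hl2 ⟨⟨hl.1.1.trans h1.le, h2⟩, h⟩) (not_le.2 h1)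
  refine ⟨l, hl.1.1, hlx, ?_, hneg⟩
  by_contra h
  have hp : 0 < G.eval l := lt_of_le_of_ne hl.2 (Ne.symm h)
  obtain ⟨z, z1, z2, z3⟩ := mk_ivt G l x hlx (mul_neg_of_pos_of_neg hp hx)
  exact absurd (hneg z z1 z2.le) (by rw [z3]; exact lt_irrefl _)

theorem mk_zero_ge (G : ℝ[X]) (b x : ℝ) (hax : x ≤ b) (ha : 0 ≤ G.eval b) (hx : G.eval x < 0) :
    ∃ r, r ≤ b ∧ x < r ∧ G.eval r = 0 ∧ ∀ y, x ≤ y → y < r → G.eval y < 0 := by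
  obtain ⟨l, h1, h2, h3, h4⟩ := mk_zero_le (G.comp (-X)) (-b) (-x) (by linarith) (by simpa using ha)
    (by simpa using hx)
  refine ⟨-l, by linarith, by linarith, by simpa using h3, ?_⟩
  intro y hy1 hy2
  simpa using h4 (-y) (by linarith) (by linarith)

theorem mk_between (H : ℝ[X]) (l x r a b : ℝ) (hlx : l < x) (hxr : x < r)
    (hlr : 0 < H.eval l * H.eval r) (ha : a ≤ l ∨ r ≤ a) (hb : b ≤ l ∨ r ≤ b) (hab : a < b)
    (hH : H.eval a * H.eval b < 0) : ∃ z, a < z ∧ z < b ∧ H.eval z = 0 ∧ z ≠ x := by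
  rcases hb with hb | hb
  · obtain ⟨z, h1, h2, h3⟩ := mk_ivt H a b hab hH
    exact ⟨z, h1, h2, h3, by intro h; linarith⟩
  rcases ha with ha | ha
  swap
  · obtain ⟨z, h1, h2, h3⟩ := mk_ivt H a b hab hH
    exact ⟨z, h1, h2, h3, by intro h; linarith⟩
  by_cases h : H.eval a * H.eval l < 0
  · have hal : a < l := lt_of_le_of_ne ha (by
      rintro rfl; exact absurd h (not_lt.2 (mul_self_nonneg _)))
    obtain ⟨z, h1, h2, h3⟩ := mk_ivt H a l hal h
    exact ⟨z, h1, by linarith, h3, by intro h; linarith⟩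
  · push Not at h
    have h' : H.eval r * H.eval b < 0 := by
      by_contra hc
      push Not at hc
      nlinarith [mul_nonneg h hc, mul_pos hlr (neg_pos.2 hH)]
    have hrb : r < b := lt_of_le_of_ne hb (by
      rintro rfl; exact absurd h' (not_lt.2 (mul_self_nonneg _)))
    obtain ⟨z, h1, h2, h3⟩ := mk_ivt H r b hrb h'
    exact ⟨z, by linarith, h2, h3, by intro h; linarith⟩

theorem mk_rolle (Q : ℝ[X]) (c d : ℝ) (hcd : c < d) (hc : Q.eval c = 0) (hd : Q.eval d = 0) :
    ∃ a, c < a ∧ a < d ∧ (derivative Q).eval a = 0 := by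
  obtain ⟨a, ha, h⟩ := exists_deriv_eq_zero (f := fun x => Q.eval x) hcd
    Q.continuous.continuousOn (by rw [hc, hd])
  exact ⟨a, ha.1, ha.2, by rwa [Polynomial.deriv] at h⟩

theorem mk_pt_a (n k : ℕ) (hk : 1 ≤ k) (hkn : k + 1 ≤ n) (c d : ℝ) (hcd : c < d)
    (hd1 : d ≤ 1) (hc : c = -1 ∨ (mkD n k).eval c = 0)
    (hd : d = 1 ∨ (mkD n k).eval d = 0) (hz : ∀ y, c < y → y < d → (mkD n k).eval y ≠ 0) :
    ∃ a, c ≤ a ∧ a < d ∧ (mkD n k).eval a ≠ 0 ∧ 0 ≤ (mkG n k).eval a ∧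
      (mkf n k).eval a = - (k * (mkD n k).eval a) := by
  rcases hc with hc | hc
  · refine ⟨-1, hc.le, hc ▸ hcd, mkD_ne n k (by omega) _ (by simp), (mkG_neg_one n k hk hkn).le, ?_⟩
    rw [mkf_eval]; ring
  · obtain ⟨a, h1, h2, h3⟩ := mk_rolle ((1 - X)^k * mkD n k) c d hcd (by simp [hc]) (by
      rcases hd with hd | hd
      · rw [hd]; simp; left; omega
      · simp [hd])
    rw [derivative_mul, derivative_pow, mkD_deriv] at h3
    have h4 : (1 - a)^(k-1) * ((1 - a) * (mkD n (k+1)).eval a - k * (mkD n k).eval a) = 0 := by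
      obtain ⟨m, rfl⟩ : ∃ m, k = m + 1 := ⟨k - 1, by omega⟩
      simp only [eval_add, eval_mul, eval_pow, eval_sub, eval_one, eval_X, derivative_sub,
        derivative_one, derivative_X, eval_C, Nat.add_sub_cancel, eval_zero] at h3 ⊢
      rw [← h3]; push_cast; ring
    have h5 : (1 - a) * (mkD n (k+1)).eval a - k * (mkD n k).eval a = 0 :=
      (mul_eq_zero.1 h4).resolve_left (pow_ne_zero _ (by linarith))
    refine ⟨a, h1.le, h2, hz a h1 h2, ?_, ?_⟩
    · rw [mkG_eval]
      have : a * (mkD n (k+1)).eval a + k * (mkD n k).eval a = (mkD n (k+1)).eval a := by linarith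
      rw [this]; simp
    · rw [mkf_eval]; linear_combination (-(1+a)) * h5

theorem mk_pt_b (n k : ℕ) (hk : 1 ≤ k) (hkn : k + 1 ≤ n) (c d : ℝ) (hcd : c < d)
    (hc1 : -1 ≤ c) (hc : c = -1 ∨ (mkD n k).eval c = 0)
    (hd : d = 1 ∨ (mkD n k).eval d = 0) (hz : ∀ y, c < y → y < d → (mkD n k).eval y ≠ 0) :
    ∃ b, c < b ∧ b ≤ d ∧ (mkD n k).eval b ≠ 0 ∧ 0 ≤ (mkG n k).eval b ∧
      (mkf n k).eval b = k * (mkD n k).eval b := by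
  rcases hd with hd | hd
  · refine ⟨1, hd ▸ hcd, hd.ge, mkD_ne n k (by omega) _ (by simp), (mkG_one n k hk hkn).le, ?_⟩
    rw [mkf_eval]; ring
  · obtain ⟨a, h1, h2, h3⟩ := mk_rolle ((1 + X)^k * mkD n k) c d hcd (by
      rcases hc with hc | hc
      · rw [hc]; simp; left; omega
      · simp [hc]) (by simp [hd])
    rw [derivative_mul, derivative_pow, mkD_deriv] at h3
    have h4 : (1 + a)^(k-1) * ((1 + a) * (mkD n (k+1)).eval a + k * (mkD n k).eval a) = 0 := by
      obtain ⟨m, rfl⟩ : ∃ m, k = m + 1 := ⟨k - 1, by omega⟩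
      simp only [eval_add, eval_mul, eval_pow, eval_one, eval_X, derivative_add,
        derivative_one, derivative_X, eval_C, Nat.add_sub_cancel, eval_zero] at h3 ⊢
      rw [← h3]; push_cast; ring
    have h5 : (1 + a) * (mkD n (k+1)).eval a + k * (mkD n k).eval a = 0 :=
      (mul_eq_zero.1 h4).resolve_left (pow_ne_zero _ (by linarith))
    refine ⟨a, h1, h2.le, hz a h1 h2, ?_, ?_⟩
    · rw [mkG_eval]
      have : a * (mkD n (k+1)).eval a + k * (mkD n k).eval a = - (mkD n (k+1)).eval a := by linarith
      rw [this]; simp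
    · rw [mkf_eval]; linear_combination (a-1) * h5

/-- Consecutive points of `{-1, 1} ∪ roots`. -/
theorem mk_points (n k : ℕ) (hkn : k + 1 ≤ n) :
    ∃ w : ℕ → ℝ, ∀ i, i < n - k + 1 → w i < w (i+1) ∧ (∀ j, i < j → j < n - k + 1 → w (i+1) ≤ w j) ∧
      -1 ≤ w i ∧ w (i+1) ≤ 1 ∧ (w i = -1 ∨ (mkD n k).eval (w i) = 0) ∧
      (w (i+1) = 1 ∨ (mkD n k).eval (w (i+1)) = 0) ∧
      ∀ y, w i < y → y < w (i+1) → (mkD n k).eval y ≠ 0 := by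
  obtain ⟨h1, h2, h3⟩ := mkD_roots n k (by omega) (by omega)
  obtain ⟨W, hW⟩ : ∃ W : Finset ℝ, W = insert 1 (insert (-1) (mkD n k).roots.toFinset) := ⟨_, rfl⟩
  have hmem : ∀ y, y ∈ W ↔ y = 1 ∨ y = -1 ∨ (mkD n k).eval y = 0 := by
    intro y; simp [hW, h1]
  have hcard : W.card = n - k + 2 := by
    rw [hW, Finset.card_insert_of_notMem, Finset.card_insert_of_notMem, h3]
    · intro h
      simp only [Multiset.mem_toFinset, mem_roots h1, IsRoot.def] at h
      exact mkD_ne n k (by omega) (-1) (by simp) h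
    · intro h
      simp only [Finset.mem_insert, Multiset.mem_toFinset, mem_roots h1, IsRoot.def] at h
      rcases h with h | h
      · norm_num at h
      · exact mkD_ne n k (by omega) 1 (by simp) h
  have hIcc : ∀ y ∈ W, -1 ≤ y ∧ y ≤ 1 := by
    intro y hy
    rcases (hmem y).1 hy with h | h | h
    · rw [h]; norm_num
    · rw [h]; norm_num
    · have := mkD_root_mem n k (by omega) y h
      exact ⟨this.1.le, this.2.le⟩
  let e := W.orderEmbOfFin hcard
  refine ⟨fun i => if h : i < n - k + 2 then e ⟨i, h⟩ else 0, ?_⟩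
  intro i hi
  have hi1 : i < n - k + 2 := by omega
  have hi2 : i + 1 < n - k + 2 := by omega
  simp only [hi1, hi2, dif_pos]
  have hm1 : e ⟨i, hi1⟩ ∈ W := W.orderEmbOfFin_mem hcard _
  have hm2 : e ⟨i+1, hi2⟩ ∈ W := W.orderEmbOfFin_mem hcard _
  have hlt : e ⟨i, hi1⟩ < e ⟨i+1, hi2⟩ := e.lt_iff_lt.2 (by simp)
  refine ⟨hlt, ?_, (hIcc _ hm1).1, (hIcc _ hm2).2, ?_, ?_, ?_⟩
  · intro j hij hj
    have hj2 : j < n - k + 2 := by omega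
    simp only [hj2, dif_pos]
    exact e.le_iff_le.2 (by simp; omega)
  · rcases (hmem _).1 hm1 with h | h | h
    · have := (hIcc _ hm2).2; linarith
    · exact Or.inl h
    · exact Or.inr h
  · rcases (hmem _).1 hm2 with h | h | h
    · exact Or.inl h
    · have := (hIcc _ hm1).1; linarith
    · exact Or.inr h
  · intro y hy1 hy2 h0
    have hyW : y ∈ W := (hmem y).2 (Or.inr (Or.inr h0))
    have : y ∈ Set.range (W.orderEmbOfFin hcard) := by
      rw [Finset.range_orderEmbOfFin]; exact hyW
    obtain ⟨j, rfl⟩ := this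
    have a1 := e.lt_iff_lt.1 hy1
    have a2 := e.lt_iff_lt.1 hy2
    rw [Fin.lt_def] at a1 a2
    simp only at a1 a2
    omega

theorem mkf_natDegree (n k : ℕ) (hkn : k + 1 ≤ n) : (mkf n k).natDegree ≤ n - k + 1 := by
  have h1 := (mkD_roots n k (by omega) (by omega)).2.1
  have h2 := (mkD_roots n (k+1) (by omega) (by omega)).2.1
  rw [mkf]
  refine (natDegree_add_le _ _).trans (max_le ?_ ?_)
  · refine natDegree_mul_le.trans ?_
    have : (X^2 - 1 : ℝ[X]).natDegree ≤ 2 := by compute_degree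
    omega
  · refine natDegree_mul_le.trans ?_
    have : (C (k:ℝ) * X : ℝ[X]).natDegree ≤ 1 := by compute_degree
    omega

theorem mk_same_sign (F : ℝ[X]) (a b : ℝ) (hab : a ≤ b) (h : ∀ y, a ≤ y → y ≤ b → F.eval y ≠ 0) :
    0 < F.eval a * F.eval b := by
  have ha := h a le_rfl hab
  have hb := h b hab le_rfl
  rcases lt_or_gt_of_ne (mul_ne_zero ha hb) with hc | hc
  · rcases hab.lt_or_eq with h' | h'
    · obtain ⟨z, z1, z2, z3⟩ := mk_ivt F a b h' hc
      exact absurd z3 (h z z1.le z2.le)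
    · rw [h'] at hc; exact absurd hc (not_lt.2 (mul_self_nonneg _))
  · exact hc

set_option maxHeartbeats 1000000 in
theorem mk_zone (n k : ℕ) (hk : 1 ≤ k) (hkn : k + 1 ≤ n) (p : ℝ[X]) (hp : p.natDegree ≤ n)
    (hb : ∀ x ∈ Set.Icc (-1:ℝ) 1, |p.eval x| ≤ 1) (x : ℝ) (hx1 : -1 ≤ x) (hx2 : x ≤ 1)
    (hG : (mkG n k).eval x < 0) :
    k * |(derivative^[k] p).eval x| ≤ |(mkf n k).eval x| := by
  by_contra hcon
  push Not at hcon
  have hkR : (0:ℝ) < k := by exact_mod_cast hk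
  obtain ⟨g, hg⟩ : ∃ g, g = derivative^[k] p := ⟨_, rfl⟩
  rw [← hg] at hcon
  have hgx : g.eval x ≠ 0 := by
    intro h; rw [h, abs_zero, mul_zero] at hcon; exact absurd hcon (not_lt.2 (abs_nonneg _))
  have hgd : g.natDegree ≤ n - k := by
    rw [hg]; exact (natDegree_iterate_derivative p k).trans (by omega)
  obtain ⟨lam, hlam⟩ : ∃ lam, lam = (mkf n k).eval x / g.eval x := ⟨_, rfl⟩
  have hlam1 : |lam| < k := by
    rw [hlam, abs_div, div_lt_iff₀ (abs_pos.2 hgx)]; exact hcon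
  obtain ⟨H, hH⟩ : ∃ H : ℝ[X], H = mkf n k - C lam * g := ⟨_, rfl⟩
  have hHx : H.eval x = 0 := by
    rw [hH, eval_sub, eval_mul, eval_C, hlam]; field_simp; ring
  have hHd : H.natDegree ≤ n - k + 1 := by
    rw [hH]
    refine (natDegree_sub_le _ _).trans (max_le (mkf_natDegree n k hkn) ?_)
    exact (natDegree_C_mul_le _ _).trans (by omega)
  -- sign of `H` at good points
  have hsg : ∀ y, 0 ≤ (mkG n k).eval y → (mkD n k).eval y ≠ 0 →
      ((mkf n k).eval y)^2 = (k * (mkD n k).eval y)^2 → 0 < H.eval y * (mkf n k).eval y := by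
    intro y hy1 hy2 hy3
    have hC := mk_lemmaC n k hk hkn p hp hb y _ _ rfl rfl (by
      rw [mkG_eval] at hy1; linarith)
    rw [← hg] at hC
    rw [hH, eval_sub, eval_mul, eval_C]
    have h1 : |(mkf n k).eval y| = k * |(mkD n k).eval y| := by
      have := abs_eq_abs.2 (sq_eq_sq_iff_eq_or_eq_neg.1 hy3)
      rw [this, abs_mul, abs_of_pos hkR]
    have h2 : 0 < |(mkD n k).eval y| := abs_pos.2 hy2
    have h3 : lam * g.eval y * (mkf n k).eval y ≤ |lam| * |(mkD n k).eval y| * |(mkf n k).eval y| := by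
      refine (le_abs_self _).trans ?_
      rw [abs_mul, abs_mul]; gcongr
    have h4 : (mkf n k).eval y * (mkf n k).eval y = |(mkf n k).eval y| * |(mkf n k).eval y| :=
      (abs_mul_abs_self _).symm
    rw [sub_mul, h4]
    rw [h1] at h3 ⊢
    have h5 : 0 < (k - |lam|) * (|(mkD n k).eval y| * (k * |(mkD n k).eval y|)) := by
      apply mul_pos (by linarith); positivity
    nlinarith
  obtain ⟨l, l1, l2, l3, l4⟩ := mk_zero_le (mkG n k) (-1) x hx1 (mkG_neg_one n k hk hkn).le hG
  obtain ⟨r, r1, r2, r3, r4⟩ := mk_zero_ge (mkG n k) 1 x hx2 (mkG_one n k hk hkn).le hG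
  have l1' : -1 < l := lt_of_le_of_ne l1 (by
    intro h; rw [← h] at l3; exact (mkG_neg_one n k hk hkn).ne' l3)
  have r1' : r < 1 := lt_of_le_of_ne r1 (by
    intro h; rw [h] at r3; exact (mkG_one n k hk hkn).ne' r3)
  have hGneg : ∀ y, l < y → y < r → (mkG n k).eval y < 0 := by
    intro y h1 h2
    rcases le_total y x with h | h
    · exact l4 y h1 h
    · exact r4 y h h2
  have hDz : ∀ y, -1 < y → y < 1 → (mkG n k).eval y = 0 → (mkD n k).eval y ≠ 0 := by
    intro y h1 h2 h3 h4
    rw [mkG_eval, h4] at h3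
    have h5 : (1 - y^2) * ((mkD n (k+1)).eval y)^2 = 0 := by linarith
    have h6 : 0 < 1 - y^2 := by nlinarith
    have h7 := (mul_eq_zero.1 h5).resolve_left h6.ne'
    exact mkD_no_double n k (by omega) (by omega) y h4 (by simpa using h7)
  have hDl := hDz l l1' (by linarith) l3
  have hDr := hDz r (by linarith) r1' r3
  have hfl : ((mkf n k).eval l)^2 = (k * (mkD n k).eval l)^2 := by rw [mk_fG, l3]; ring
  have hfr : ((mkf n k).eval r)^2 = (k * (mkD n k).eval r)^2 := by rw [mk_fG, r3]; ring
  have hfne : ∀ y, l ≤ y → y ≤ r → (mkf n k).eval y ≠ 0 := by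
    intro y h1 h2 h3
    have h4 := mk_fG n k y
    rw [h3] at h4
    have h6 : 0 < 1 - y^2 := by nlinarith
    rcases h1.eq_or_lt with h1 | h1
    · rw [← h1, l3] at h4
      have : 0 < (k * (mkD n k).eval l)^2 := by positivity
      linarith
    rcases h2.eq_or_lt with h2 | h2
    · rw [h2, r3] at h4
      have : 0 < (k * (mkD n k).eval r)^2 := by positivity
      linarith
    · nlinarith [mul_pos h6 (neg_pos.2 (hGneg y h1 h2)), sq_nonneg (k * (mkD n k).eval y)]
  have hflr := mk_same_sign (mkf n k) l r (by linarith) hfne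
  have hHl := hsg l l3.ge hDl hfl
  have hHr := hsg r r3.ge hDr hfr
  have hHlr : 0 < H.eval l * H.eval r := by
    by_contra hc
    push Not at hc
    nlinarith [mul_pos hHl hHr]
  have hH0 : H ≠ 0 := by rintro h; rw [h] at hHlr; simp at hHlr
  have hout : ∀ y, 0 ≤ (mkG n k).eval y → y ≤ l ∨ r ≤ y := by
    intro y hy
    by_contra h
    push Not at h
    exact absurd hy (not_le.2 (hGneg y h.1 h.2))
  obtain ⟨w, hw⟩ := mk_points n k hkn
  have hz : ∀ i, ∃ z, i < n - k + 1 → w i < z ∧ z < w (i+1) ∧ H.eval z = 0 ∧ z ≠ x := by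
    intro i
    by_cases hi : i < n - k + 1
    swap
    · exact ⟨0, fun h => absurd h hi⟩
    obtain ⟨w1, -, w2, w3, w4, w5, w6⟩ := hw i hi
    obtain ⟨a, a1, a2, a3, a4, a5⟩ := mk_pt_a n k hk hkn _ _ w1 w3 w4 w5 w6
    obtain ⟨b, b1, b2, b3, b4, b5⟩ := mk_pt_b n k hk hkn _ _ w1 w2 w4 w5 w6
    have ha := hsg a a4 a3 (by rw [a5]; ring)
    have hbb := hsg b b4 b3 (by rw [b5])
    have hne : ∀ y, w i ≤ y → y ≤ w (i+1) → (y = a ∨ y = b ∨ (w i < y ∧ y < w (i+1))) →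
        (mkD n k).eval y ≠ 0 := by
      intro y _ _ h3
      rcases h3 with h | h | h
      · rw [h]; exact a3
      · rw [h]; exact b3
      · exact w6 y h.1 h.2
    have hDab : 0 < (mkD n k).eval a * (mkD n k).eval b := by
      rcases le_total a b with h | h
      · apply mk_same_sign _ _ _ h
        intro y h1 h2
        refine hne y (by linarith) (by linarith) ?_
        rcases h1.eq_or_lt with h1 | h1
        · exact Or.inl h1.symm
        rcases h2.eq_or_lt with h2 | h2
        · exact Or.inr (Or.inl h2)
        · exact Or.inr (Or.inr ⟨by linarith, by linarith⟩)
      · rw [mul_comm]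
        apply mk_same_sign _ _ _ h
        intro y h1 h2
        exact w6 y (by linarith) (by linarith)
    have hHab : H.eval a * H.eval b < 0 := by
      by_contra hc
      push Not at hc
      rw [a5] at ha
      rw [b5] at hbb
      have h1 := mul_pos ha hbb
      have h2 := mul_nonneg hc (mul_pos (mul_pos hkR hkR) hDab).le
      nlinarith
    have haT := hout a a4
    have hbT := hout b b4
    rcases lt_trichotomy a b with h | h | h
    · obtain ⟨z, z1, z2, z3, z4⟩ := mk_between H l x r a b l2 r2 hHlr haT hbT h hHab
      exact ⟨z, fun _ => ⟨by linarith, by linarith, z3, z4⟩⟩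
    · rw [h] at hHab; exact absurd hHab (not_lt.2 (mul_self_nonneg _))
    · obtain ⟨z, z1, z2, z3, z4⟩ := mk_between H l x r b a l2 r2 hHlr hbT haT h
        (by rw [mul_comm]; exact hHab)
      exact ⟨z, fun _ => ⟨by linarith, by linarith, z3, z4⟩⟩
  choose z hz using hz
  have := mk_inj_card_succ H hH0 (n - k + 1) z x (by
      intro i hi j hj hij
      have h1 := (hz i hi).2.1
      have h2 := (hz j hj).1
      have h3 := (hw i hi).2.1 j hij hj
      exact (by linarith : z i < z j).ne) (fun i hi => (hz i hi).2.2.1) hHx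
      (fun i hi => (hz i hi).2.2.2)
  have hle : H.roots.toFinset.card ≤ H.natDegree :=
    (Multiset.toFinset_card_le _).trans (card_roots' _)
  omega

/-- Generating series of the `r`-th derivatives of the Chebyshev polynomials `U_m` at `x`. -/
noncomputable def mkY (R : Type) [CommRing R] (r : ℕ) (x : R) : PowerSeries R :=
  PowerSeries.mk (fun m => (derivative^[r] (Chebyshev.U R (m:ℤ))).eval x)

/-- The quadratic `1 - 2 x t + t²`. -/
noncomputable def mkP (R : Type) [CommRing R] (x : R) : PowerSeries R :=
  1 - PowerSeries.C (2 * x) * PowerSeries.X + PowerSeries.X * PowerSeries.X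

theorem mk_U_iter (R : Type) [CommRing R] (r : ℕ) (x : R) (m : ℤ) :
    (derivative^[r+1] (Chebyshev.U R (m+2))).eval x =
      2 * x * (derivative^[r+1] (Chebyshev.U R (m+1))).eval x
      + 2 * (r+1) * (derivative^[r] (Chebyshev.U R (m+1))).eval x
      - (derivative^[r+1] (Chebyshev.U R m)).eval x := by
  have e : (2 * X * Chebyshev.U R (m+1) : R[X]) = C 2 * (Chebyshev.U R (m+1) * X) := by
    rw [show (C (2:R) : R[X]) = 2 from rfl]; ring
  rw [Chebyshev.U_add_two, iterate_derivative_sub, e, iterate_derivative_C_mul,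
    iterate_derivative_mul_X]
  simp
  ring

theorem mkPY_zero (R : Type) [CommRing R] (x : R) : mkP R x * mkY R 0 x = 1 := by
  ext m
  rw [mkP, add_mul, sub_mul, one_mul, mul_assoc, mul_assoc, map_add, map_sub,
    PowerSeries.coeff_C_mul]
  rcases m with _ | _ | m
  · simp [mkY]
  · rw [PowerSeries.coeff_succ_X_mul, PowerSeries.coeff_succ_X_mul]
    simp [mkY, PowerSeries.coeff_one]
  · rw [PowerSeries.coeff_succ_X_mul, PowerSeries.coeff_succ_X_mul, PowerSeries.coeff_succ_X_mul]
    simp [mkY, PowerSeries.coeff_one]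
    have := congrArg (eval x) (Chebyshev.U_add_two R (m:ℤ))
    rw [show ((m:ℤ) + 1 + 1) = m + 2 by ring, this]
    simp

theorem mkPY_succ (R : Type) [CommRing R] (r : ℕ) (x : R) :
    mkP R x * mkY R (r+1) x =
      PowerSeries.C (2 * ((r:R)+1)) * (PowerSeries.X * mkY R r x) := by
  ext m
  rw [mkP, add_mul, sub_mul, one_mul, mul_assoc, mul_assoc, map_add, map_sub,
    PowerSeries.coeff_C_mul, PowerSeries.coeff_C_mul]
  rcases m with _ | _ | m
  · simp only [mkY, PowerSeries.coeff_mk, PowerSeries.coeff_zero_X_mul]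
    simp [-Function.iterate_succ, Function.iterate_succ_apply]
  · rw [PowerSeries.coeff_succ_X_mul, PowerSeries.coeff_succ_X_mul, PowerSeries.coeff_succ_X_mul]
    have := mk_U_iter R r x (-1)
    simp only [mkY, PowerSeries.coeff_mk, PowerSeries.coeff_zero_X_mul]
    norm_num at this ⊢
    rw [this]
  · rw [PowerSeries.coeff_succ_X_mul, PowerSeries.coeff_succ_X_mul, PowerSeries.coeff_succ_X_mul,
      PowerSeries.coeff_succ_X_mul]
    have := mk_U_iter R r x m
    simp only [mkY, PowerSeries.coeff_mk]
    push_cast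
    rw [show ((m:ℤ) + 1 + 1) = m + 2 by ring, this]; ring

theorem mkPY (R : Type) [CommRing R] (r : ℕ) (x : R) :
    mkP R x ^ (r+1) * mkY R r x =
      PowerSeries.C (r.factorial : R) * (PowerSeries.C 2 * PowerSeries.X)^r := by
  induction r with
  | zero => simp [mkPY_zero]
  | succ r ih =>
    rw [pow_succ, mul_assoc, mkPY_succ]
    have : mkP R x ^ (r+1) * (PowerSeries.C (2 * ((r:R)+1)) * (PowerSeries.X * mkY R r x)) =
      PowerSeries.C (2 * ((r:R)+1)) * PowerSeries.X * (mkP R x ^ (r+1) * mkY R r x) := by ring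
    rw [this, ih, Nat.factorial_succ]
    push_cast
    simp only [map_mul, map_add, map_natCast, map_one]
    ring

/-- Generating series of the majorant. -/
noncomputable def mkS (R : Type) [CommRing R] (j : ℕ) (x : R) : PowerSeries R :=
  PowerSeries.C (x^2 - 1) * mkY R (j+1) x + PowerSeries.C (((j:R)+1) * x) * mkY R j x

theorem mkPS (R : Type) [CommRing R] (j : ℕ) (x : R) :
    mkP R x ^ (j+2) * mkS R j x =
      PowerSeries.C ((j+1).factorial : R) * (PowerSeries.C 2 * PowerSeries.X)^j *
       (PowerSeries.C x * (1 + PowerSeries.X * PowerSeries.X) - PowerSeries.C 2 * PowerSeries.X) := by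
  have h1 := mkPY R (j+1) x
  have h2 := mkPY R j x
  have : mkP R x ^ (j+2) * mkS R j x =
     PowerSeries.C (x^2 - 1) * (mkP R x ^ (j+1+1) * mkY R (j+1) x) +
      PowerSeries.C (((j:R)+1) * x) * mkP R x * (mkP R x ^ (j+1) * mkY R j x) := by
    rw [mkS]; ring
  rw [this, h1, h2, mkP, Nat.factorial_succ]
  push_cast
  simp only [map_mul, map_add, map_natCast, map_one, map_sub, map_pow]
  ring

/-- Geometric series. -/
noncomputable def mkGeo (R : Type) [CommRing R] (z : R) : PowerSeries R :=
  PowerSeries.mk (fun m => z^m)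

theorem mkGeo_mul (R : Type) [CommRing R] (z : R) :
    (1 - PowerSeries.C z * PowerSeries.X) * mkGeo R z = 1 := by
  ext m
  rw [sub_mul, one_mul, mul_assoc, map_sub, PowerSeries.coeff_C_mul]
  rcases m with _ | m
  · simp [mkGeo]
  · rw [PowerSeries.coeff_succ_X_mul]
    simp [mkGeo, PowerSeries.coeff_one, pow_succ]
    ring

theorem mkS_formula (R : Type) [CommRing R] (j : ℕ) (x z y : R) (hzy : z * y = 1)
    (hx : z + y = 2 * x) :
    PowerSeries.C 2 * mkS R j x = PowerSeries.C ((j+1).factorial : R) *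
      (PowerSeries.C 2 * PowerSeries.X)^j *
      (PowerSeries.C z * (mkGeo R z ^ (j+2) * mkGeo R y ^ j) +
        PowerSeries.C y * (mkGeo R z ^ j * mkGeo R y ^ (j+2))) := by
  have hp := mkGeo_mul R z
  have hq := mkGeo_mul R y
  have hS := mkPS R j x
  have hC1 : PowerSeries.C z * PowerSeries.C y = 1 := by rw [← map_mul, hzy, map_one]
  have hC2 : PowerSeries.C z + PowerSeries.C y = PowerSeries.C 2 * PowerSeries.C x := by
    rw [← map_mul, ← hx, map_add]
  have hP : mkP R x = (1 - PowerSeries.C z * PowerSeries.X) * (1 - PowerSeries.C y * PowerSeries.X) := by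
    rw [mkP, ← hx, map_add]
    linear_combination (-PowerSeries.X * PowerSeries.X) * hC1
  have h2 : (PowerSeries.C (2:R) : PowerSeries R) = 2 := map_ofNat _ 2
  set p := mkGeo R z
  set q := mkGeo R y
  set a := 1 - PowerSeries.C z * PowerSeries.X with ha
  set b := 1 - PowerSeries.C y * PowerSeries.X with hb
  have hpq : (p * q)^(j+2) * mkP R x ^ (j+2) = 1 := by
    rw [← mul_pow, hP, show p * q * (a * b) = (a * p) * (b * q) by ring, hp, hq]; simp
  have key : PowerSeries.C 2 * (PowerSeries.C x * (1 + PowerSeries.X * PowerSeries.X) -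
      PowerSeries.C 2 * PowerSeries.X) = PowerSeries.C z * b^2 + PowerSeries.C y * a^2 := by
    rw [ha, hb, h2]
    rw [h2] at hC2
    linear_combination (4 * PowerSeries.X - PowerSeries.X^2 * (PowerSeries.C y + PowerSeries.C z)) * hC1
      - (1 + PowerSeries.X^2) * hC2
  calc PowerSeries.C 2 * mkS R j x
      = PowerSeries.C 2 * ((p * q)^(j+2) * mkP R x ^ (j+2)) * mkS R j x := by rw [hpq, mul_one]
    _ = PowerSeries.C 2 * (p * q)^(j+2) * (mkP R x ^ (j+2) * mkS R j x) := by ring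
    _ = PowerSeries.C ((j+1).factorial : R) * (PowerSeries.C 2 * PowerSeries.X)^j *
        ((p * q)^(j+2) * (PowerSeries.C 2 * (PowerSeries.C x * (1 + PowerSeries.X * PowerSeries.X) -
      PowerSeries.C 2 * PowerSeries.X))) := by rw [hS]; ring
    _ = _ := by
      rw [key]
      congr 1
      have e1 : (p * q)^(j+2) * (PowerSeries.C z * b^2 + PowerSeries.C y * a^2) =
        PowerSeries.C z * (p^(j+2) * q^j) * (b*q)^2 + PowerSeries.C y * (p^j * q^(j+2)) * (a*p)^2 := by
        ring
      rw [e1, hp, hq]; ring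

/-- Coefficientwise majorization. -/
def mkMaj (A : PowerSeries ℂ) (B : PowerSeries ℝ) : Prop :=
  ∀ m, ‖PowerSeries.coeff m A‖ ≤ PowerSeries.coeff m B

theorem mkMaj_mul {A A' : PowerSeries ℂ} {B B' : PowerSeries ℝ} (h : mkMaj A B)
    (h' : mkMaj A' B') : mkMaj (A * A') (B * B') := by
  intro m
  rw [PowerSeries.coeff_mul, PowerSeries.coeff_mul]
  refine (norm_sum_le _ _).trans (Finset.sum_le_sum ?_)
  intro i _
  rw [norm_mul]
  exact mul_le_mul (h _) (h' _) (norm_nonneg _) ((norm_nonneg _).trans (h _))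

theorem mkMaj_add {A A' : PowerSeries ℂ} {B B' : PowerSeries ℝ} (h : mkMaj A B)
    (h' : mkMaj A' B') : mkMaj (A + A') (B + B') := by
  intro m
  rw [map_add, map_add]
  exact (norm_add_le _ _).trans (add_le_add (h _) (h' _))

theorem mkMaj_C {z : ℂ} {r : ℝ} (h : ‖z‖ ≤ r) : mkMaj (PowerSeries.C z) (PowerSeries.C r) := by
  intro m
  rw [PowerSeries.coeff_C, PowerSeries.coeff_C]
  split_ifs
  · exact h
  · simp

theorem mkMaj_X : mkMaj PowerSeries.X PowerSeries.X := by
  intro m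
  rw [PowerSeries.coeff_X, PowerSeries.coeff_X]
  split_ifs <;> simp

theorem mkMaj_pow {A : PowerSeries ℂ} {B : PowerSeries ℝ} (h : mkMaj A B) (j : ℕ) :
    mkMaj (A^j) (B^j) := by
  induction j with
  | zero => simpa using mkMaj_C (z := 1) (r := 1) (by simp)
  | succ j ih => rw [pow_succ, pow_succ]; exact mkMaj_mul ih h

theorem mkMaj_geo {z : ℂ} (h : ‖z‖ = 1) : mkMaj (mkGeo ℂ z) (mkGeo ℝ 1) := by
  intro m; simp [mkGeo, h]

theorem mkS_coeff (R : Type) [CommRing R] (j : ℕ) (x : R) (m : ℕ) :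
    PowerSeries.coeff m (mkS R j x) = (x^2 - 1) * (derivative^[j+1] (Chebyshev.U R (m:ℤ))).eval x
      + ((j:R)+1) * x * (derivative^[j] (Chebyshev.U R (m:ℤ))).eval x := by
  rw [mkS, map_add, PowerSeries.coeff_C_mul, PowerSeries.coeff_C_mul]
  simp [mkY]

theorem mk_U_cast (r m : ℕ) (x : ℝ) : (derivative^[r] (Chebyshev.U ℂ (m:ℤ))).eval (x:ℂ) =
    (((derivative^[r] (Chebyshev.U ℝ (m:ℤ))).eval x : ℝ) : ℂ) := by
  rw [← Chebyshev.map_U Complex.ofRealHom, iterate_derivative_map]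
  exact eval_map_apply (f := Complex.ofRealHom) x

theorem mkS_bound (j m : ℕ) (x : ℝ) (hx : |x| ≤ 1) :
    |PowerSeries.coeff m (mkS ℝ j x)| ≤ PowerSeries.coeff m (mkS ℝ j 1) := by
  obtain ⟨h1, h2⟩ := abs_le.1 hx
  obtain ⟨t, ht⟩ : ∃ t, Real.cos t = x := ⟨_, Real.cos_arccos h1 h2⟩
  have hz : ‖Complex.exp (t * Complex.I)‖ = 1 := Complex.norm_exp_ofReal_mul_I t
  have hy : ‖Complex.exp (-t * Complex.I)‖ = 1 := by
    have := Complex.norm_exp_ofReal_mul_I (-t); simpa using this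
  have hzy : Complex.exp (t * Complex.I) * Complex.exp (-t * Complex.I) = 1 := by
    rw [← Complex.exp_add]; simp
  have hs : Complex.exp (t * Complex.I) + Complex.exp (-t * Complex.I) = 2 * (x:ℂ) := by
    rw [← ht, Complex.ofReal_cos, Complex.cos]; ring
  have f1 := mkS_formula ℂ j x _ _ hzy hs
  have f2 := mkS_formula ℝ j 1 1 1 (by norm_num) (by norm_num)
  have hmaj : mkMaj (PowerSeries.C 2 * mkS ℂ j x) (PowerSeries.C 2 * mkS ℝ j 1) := by
    rw [f1, f2]
    have g1 := mkMaj_geo hz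
    have g2 := mkMaj_geo hy
    refine mkMaj_mul (mkMaj_mul (mkMaj_C (by simp)) (mkMaj_pow (mkMaj_mul (mkMaj_C (by simp)) mkMaj_X) j)) ?_
    refine mkMaj_add ?_ ?_
    · exact mkMaj_mul (mkMaj_C hz.le) (mkMaj_mul (mkMaj_pow g1 _) (mkMaj_pow g2 _))
    · exact mkMaj_mul (mkMaj_C hy.le) (mkMaj_mul (mkMaj_pow g1 _) (mkMaj_pow g2 _))
  have := hmaj m
  rw [PowerSeries.coeff_C_mul, PowerSeries.coeff_C_mul, norm_mul] at this
  have hc : PowerSeries.coeff m (mkS ℂ j x) = ((PowerSeries.coeff m (mkS ℝ j x) : ℝ) : ℂ) := by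
    rw [mkS_coeff, mkS_coeff, mk_U_cast, mk_U_cast]; push_cast; ring
  rw [hc, Complex.norm_real, Real.norm_eq_abs] at this
  simp at this
  linarith

theorem mkD_U (m r : ℕ) (x : ℝ) : (mkD (m+1) (r+1)).eval x =
    ((m:ℝ)+1) * (derivative^[r] (Chebyshev.U ℝ (m:ℤ))).eval x := by
  have h : derivative (Chebyshev.T ℝ ((m+1 : ℕ):ℤ)) = C ((m:ℝ)+1) * Chebyshev.U ℝ (m:ℤ) := by
    rw [Chebyshev.T_derivative_eq_U]
    push_cast
    simp
  rw [mkD, Function.iterate_succ_apply, h, iterate_derivative_C_mul, eval_mul, eval_C]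

theorem mkf_bound (n k : ℕ) (hk : 1 ≤ k) (hkn : k + 1 ≤ n) (x : ℝ) (hx : |x| ≤ 1) :
    |(mkf n k).eval x| ≤ k * (mkD n k).eval 1 := by
  obtain ⟨j, rfl⟩ : ∃ j, k = j + 1 := ⟨k - 1, by omega⟩
  obtain ⟨m, rfl⟩ : ∃ m, n = m + 1 := ⟨n - 1, by omega⟩
  have hf : ∀ y, (mkf (m+1) (j+1)).eval y = ((m:ℝ)+1) * PowerSeries.coeff m (mkS ℝ j y) := by
    intro y
    rw [mkf_eval, mkS_coeff, mkD_U, mkD_U]; push_cast; ring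
  have h1 : (mkf (m+1) (j+1)).eval 1 = ((j+1:ℕ):ℝ) * (mkD (m+1) (j+1)).eval 1 := by
    rw [mkf_eval]; ring
  rw [← h1, hf, hf, abs_mul, abs_of_pos (by positivity)]
  gcongr
  exact mkS_bound j m x hx

theorem mkD_markovConst (n k : ℕ) : (mkD n k).eval 1 = markovConst n k := by
  rw [mkD, Chebyshev.iterate_derivative_T_eval_one_eq_div, markovConst]
  push_cast
  rfl

theorem mk_markov_unit (n k : ℕ) (p : ℝ[X]) (hp : p.natDegree ≤ n)
    (hb : ∀ x ∈ Set.Icc (-1:ℝ) 1, |p.eval x| ≤ 1) (x : ℝ) (hx : x ∈ Set.Icc (-1:ℝ) 1) :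
    |(derivative^[k] p).eval x| ≤ (mkD n k).eval 1 := by
  have hpd : p.degree ≤ n := natDegree_le_iff_degree_le.1 hp
  have habs : |x| ≤ 1 := abs_le.2 hx
  rcases Nat.eq_zero_or_pos k with hk | hk
  · subst hk
    simpa [mkD_zero] using hb x hx
  rcases Nat.lt_or_ge k n with hkn | hkn
  · have hT : |(mkD n k).eval x| ≤ (mkD n k).eval 1 :=
      Chebyshev.abs_iterate_derivative_T_real_le (n:ℤ) k habs
    by_cases hG : 0 ≤ (mkG n k).eval x
    · have := mk_lemmaC n k hk hkn p hp hb x _ _ rfl rfl (by rw [mkG_eval] at hG; linarith)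
      exact this.trans hT
    · push Not at hG
      have h1 := mk_zone n k hk hkn p hp hb x hx.1 hx.2 hG
      have h2 := mkf_bound n k hk hkn x habs
      have hkR : (0:ℝ) < k := by exact_mod_cast hk
      exact le_of_mul_le_mul_left (h1.trans h2) hkR
  · -- the derivative is constant
    have hd : (derivative^[k] p).natDegree = 0 := by
      have := natDegree_iterate_derivative p k
      omega
    have hc : (derivative^[k] p).eval x = (derivative^[k] p).eval 1 := by
      rw [eq_C_of_natDegree_eq_zero hd]; simp
    rw [hc, abs_le]
    have h1 := Chebyshev.eval_iterate_derivative_le_of_forall_abs_le_one (k := k) le_rfl hpd hb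
    have h2 := Chebyshev.eval_iterate_derivative_le_of_forall_abs_le_one (k := k) (P := -p)
      (n := n) (x := 1) le_rfl (by rwa [degree_neg]) (by simpa using hb)
    rw [iterate_derivative_neg, eval_neg] at h2
    exact ⟨by rw [mkD]; linarith, h1⟩

theorem mk_markov_scaled (n k : ℕ) (p : ℝ[X]) (hp : p.natDegree ≤ n) (M : ℝ)
    (hb : ∀ x ∈ Set.Icc (-1:ℝ) 1, |p.eval x| ≤ M) (x : ℝ) (hx : x ∈ Set.Icc (-1:ℝ) 1) :
    |(derivative^[k] p).eval x| ≤ markovConst n k * M := by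
  rw [← mkD_markovConst]
  have hM : 0 ≤ M := (abs_nonneg _).trans (hb 1 (by norm_num))
  rcases hM.eq_or_lt with hM | hM
  · have hp0 : p = 0 := by
      apply Polynomial.eq_zero_of_infinite_isRoot
      refine Set.Infinite.mono ?_ (Set.Icc_infinite (show (-1:ℝ) < 1 by norm_num))
      intro y hy
      have := hb y hy
      rw [← hM] at this
      exact abs_nonpos_iff.1 this
    rw [hp0, ← hM]
    simp
  · have := mk_markov_unit n k (C M⁻¹ * p) ((natDegree_C_mul_le _ _).trans hp) (by
      intro y hy
      rw [eval_mul, eval_C, abs_mul, abs_of_pos (inv_pos.2 hM), inv_mul_le_iff₀ hM, mul_one]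
      exact hb y hy) x hx
    rw [iterate_derivative_C_mul, eval_mul, eval_C, abs_mul, abs_of_pos (inv_pos.2 hM),
      inv_mul_le_iff₀ hM] at this
    linarith

theorem mk_iter_comp (p : ℝ[X]) (α β : ℝ) (k : ℕ) :
    derivative^[k] (p.comp (C α * X + C β)) =
      C (α^k) * (derivative^[k] p).comp (C α * X + C β) := by
  induction k with
  | zero => simp
  | succ k ih =>
    rw [Function.iterate_succ_apply', ih, Function.iterate_succ_apply', derivative_C_mul,
      derivative_comp]
    simp [pow_succ, mul_assoc]

theorem markov_brothers_inequality_interval (d k : ℕ) (a b : ℝ) (hab : a < b)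
    (p : Polynomial ℝ) (hp : p.natDegree ≤ d) :
    sSup ((fun x => |(Polynomial.derivative^[k] p).eval x|) '' Set.Icc a b) ≤
      (2 / (b - a)) ^ k * markovConst d k *
        sSup ((fun x => |p.eval x|) '' Set.Icc a b) := by
  have hbdd : BddAbove ((fun x => |p.eval x|) '' Set.Icc a b) :=
    (isCompact_Icc.image (p.continuous.abs)).bddAbove
  set M := sSup ((fun x => |p.eval x|) '' Set.Icc a b) with hM
  have hpM : ∀ x ∈ Set.Icc a b, |p.eval x| ≤ M := fun x hx => le_csSup hbdd ⟨x, hx, rfl⟩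
  have hba : 0 < b - a := by linarith
  apply csSup_le ((Set.nonempty_Icc.2 hab.le).image _)
  rintro _ ⟨x, hx, rfl⟩
  obtain ⟨α, hα⟩ : ∃ α, α = (b - a) / 2 := ⟨_, rfl⟩
  obtain ⟨β, hβ⟩ : ∃ β, β = (a + b) / 2 := ⟨_, rfl⟩
  have hα0 : 0 < α := by rw [hα]; linarith
  have hq := mk_markov_scaled d k (p.comp (C α * X + C β)) (by
      refine natDegree_comp_le.trans ?_
      have : (C α * X + C β : ℝ[X]).natDegree ≤ 1 := by compute_degree
      nlinarith) M (by
      intro y hy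
      rw [eval_comp]
      apply hpM
      simp only [eval_add, eval_mul, eval_C, eval_X]
      constructor <;> nlinarith [hy.1, hy.2]) ((x - β) / α) (by
      constructor
      · rw [le_div_iff₀ hα0]; linarith [hx.1]
      · rw [div_le_iff₀ hα0]; linarith [hx.2])
  have he : (C α * X + C β : ℝ[X]).eval ((x - β)/α) = x := by
    simp; field_simp; ring
  rw [mk_iter_comp, eval_mul, eval_C, eval_comp, he, abs_mul, abs_of_pos (pow_pos hα0 k)] at hq
  have h2 : 2 / (b - a) = α⁻¹ := by rw [hα, inv_div]
  rw [h2, inv_pow, mul_assoc]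
  show |(derivative^[k] p).eval x| ≤ _
  rwa [le_inv_mul_iff₀ (pow_pos hα0 k)]
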